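/- Let K be a number field, G = G_m^t × A with A an abelian variety over K, and P = (P_T, P_A) ∈ G(K). Suppose P_T ∈ (O_{K,S}^×)^t for a finite set of places S. Then G(K) ∩ (End_K(G)·P)_div is contained in (O_{K,S}^×)^t × A(K), hence is a finitely generated abelian group, and the quotient (G(K) ∩ (End_K(G)·P)_div)/(End_K(G)·P) is finite. -/

import Mathlib

open IsDedekindDomain

/-- The division closure of an additive subgroup. -/
def AddSubgroup.divClosure {G : Type*} [AddCommGroup G] (Γ : AddSubgroup G) : AddSubgroup G where
  carrier := {x : G | ∃ n : ℕ, 0 < n ∧ n • x ∈ Γ}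
  zero_mem' := ⟨1, one_pos, by simpa using Γ.zero_mem⟩
  add_mem' := by
    rintro a b ⟨n, hn, ha⟩ ⟨m, hm, hb⟩
    refine ⟨n * m, Nat.mul_pos hn hm, ?_⟩
    have h1 : (n * m) • a ∈ Γ := by
      rw [mul_comm, mul_smul]; exact Γ.nsmul_mem ha m
    have h2 : (n * m) • b ∈ Γ := by
      rw [mul_smul]; exact Γ.nsmul_mem hb n
    rw [smul_add]; exact Γ.add_mem h1 h2
  neg_mem' := by
    rintro a ⟨n, hn, ha⟩
    exact ⟨n, hn, by rw [smul_neg]; exact Γ.neg_mem ha⟩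

theorem aux_sunit_fg {K : Type*} [Field K] [NumberField K]
    (S : Set (HeightOneSpectrum (NumberField.RingOfIntegers K))) (hS : S.Finite) :
    (S.unit K).FG := by
  have : Finite S := hS
  let R := NumberField.RingOfIntegers K
  let f0 : Rˣ →* S.unit K := (Units.map (algebraMap R K : R →* K)).codRestrict (S.unit K) (by
    intro x v _
    rw [← HeightOneSpectrum.valuationOfNeZero_eq, HeightOneSpectrum.valuation_of_unit_eq]
    rfl)
  let f : Additive Rˣ →ₗ[ℤ] Additive (S.unit K) := (MonoidHom.toAdditive f0).toIntLinearMap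
  let g0 : S → (Additive (S.unit K) →+ ℤ) := fun v =>
    MonoidHom.toAdditiveLeft ((v.1.valuationOfNeZero (K := K)).comp (S.unit K).subtype)
  let g : Additive (S.unit K) →ₗ[ℤ] (S → ℤ) := LinearMap.pi fun v => (g0 v).toIntLinearMap
  have hg : ∀ (x : S.unit K) (v : S), g (Additive.ofMul x) v =
      Multiplicative.toAdd (v.1.valuationOfNeZero (x : Kˣ)) := fun _ _ => rfl
  have hex : LinearMap.range f = LinearMap.ker g := by
    ext x
    obtain ⟨x, rfl⟩ := Additive.ofMul.surjective x
    constructor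
    · rintro ⟨y, hy⟩
      obtain ⟨y, rfl⟩ := Additive.ofMul.surjective y
      have hy' : f0 y = x := hy
      subst hy'
      rw [LinearMap.mem_ker]
      funext v
      rw [hg]
      change Multiplicative.toAdd (v.1.valuationOfNeZero
        (Units.map (algebraMap R K : R →* K) y)) = 0
      rw [HeightOneSpectrum.valuation_of_unit_eq]
      rfl
    · intro hx
      rw [LinearMap.mem_ker] at hx
      have hv : ∀ v : HeightOneSpectrum R, v.valuation K ((x : Kˣ) : K) = 1 := by
        intro v
        by_cases hvS : v ∈ S
        · have h1 := congrFun hx ⟨v, hvS⟩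
          rw [hg] at h1
          have h2 : v.valuationOfNeZero (x : Kˣ) = 1 := h1
          rw [← HeightOneSpectrum.valuationOfNeZero_eq, h2]
          rfl
        · exact x.2 v hvS
      obtain ⟨a, ha⟩ := HeightOneSpectrum.mem_integers_of_valuation_le_one (R := R) K
        ((x : Kˣ) : K) (fun v => (hv v).le)
      obtain ⟨b, hb⟩ := HeightOneSpectrum.mem_integers_of_valuation_le_one (R := R) K
        (((x : Kˣ)⁻¹ : Kˣ) : K) (fun v => by simp [hv v])
      have hab : a * b = 1 := by
        apply FaithfulSMul.algebraMap_injective R K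
        rw [map_mul, ha, hb, map_one, Units.mul_inv]
      refine ⟨Additive.ofMul (Units.mk a b hab (by rw [mul_comm, hab])), ?_⟩
      change Additive.ofMul (f0 _) = Additive.ofMul x
      congr 1
      apply Subtype.ext
      apply Units.ext
      exact ha
  have hN : IsNoetherian ℤ (Additive (S.unit K)) := isNoetherian_of_range_eq_ker f g hex
  rw [← Group.fg_iff_subgroup_fg, GroupFG.iff_add_fg, ← Module.Finite.iff_addGroup_fg]
  infer_instance

theorem aux_fg_of_le {G : Type*} [AddCommGroup G] {H U : AddSubgroup G} (h : H ≤ U)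
    (hU : U.FG) : AddGroup.FG H := by
  have h1 : (AddSubgroup.toIntSubmodule U).FG := by
    rw [Submodule.fg_iff_addSubgroup_fg]; exact hU
  have := isNoetherian_of_fg_of_noetherian _ h1
  have h2 : (AddSubgroup.toIntSubmodule H).FG :=
    isNoetherian_submodule.mp this _ h
  rw [Submodule.fg_iff_addSubgroup_fg] at h2
  exact (AddGroup.fg_iff_addSubgroup_fg H).mpr h2

/-- Lemma (quotient-finite-Rémond). Let `K` be a number field with algebraic closure `K̄`, and
let `G = 𝔾ₘ^t × A` with `A` an abelian variety over `K`. We model `G(K̄)` as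
`M = Additive ((Fin t → K̄ˣ)) × AV`, where `AV` stands for `A(K̄)`; the subgroup `AK ≤ AV` is
`A(K)` (finitely generated, by the Mordell–Weil theorem), and `endA : E → (AV →+ AV)` is the
family of `K`-endomorphisms of `A` (they preserve `A(K)`). The `K`-endomorphisms of the torus
are given by integer matrices acting by `x ↦ (r ↦ ∏ s, x s ^ a r s)`. Let `P = (P_T, P_A) ∈ G(K)`
with `P_T ∈ (𝒪_{K,S}^×)^t` for a finite set of places `S`. Then
`G(K) ∩ (End_K(G)·P)_div` is contained in `(𝒪_{K,S}^×)^t × A(K)`, hence is a finitely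
generated abelian group, and the quotient `(G(K) ∩ (End_K(G)·P)_div)/(End_K(G)·P)` is finite. -/
theorem stmt18 {K : Type*} [Field K] [NumberField K] (t : ℕ)
    (S : Set (HeightOneSpectrum (NumberField.RingOfIntegers K))) (hS : S.Finite)
    (AV E : Type*) [AddCommGroup AV] (AK : AddSubgroup AV) (hMW : AddGroup.FG AK)
    (endA : E → (AV →+ AV)) (hendA : ∀ (e : E), ∀ x ∈ AK, endA e x ∈ AK)
    (j : Kˣ →* (AlgebraicClosure K)ˣ)
    (hj : j = Units.map (algebraMap K (AlgebraicClosure K)).toMonoidHom)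
    (GK : AddSubgroup (Additive (Fin t → (AlgebraicClosure K)ˣ) × AV))
    (hGK : GK = (Subgroup.toAddSubgroup (Subgroup.pi Set.univ fun _ => j.range)).prod AK)
    (P : Additive (Fin t → (AlgebraicClosure K)ˣ) × AV)
    (hPK : P ∈ GK)
    (hPT : ∀ i : Fin t, ∃ u ∈ S.unit K, j u = Additive.toMul P.1 i)
    (EndGP : AddSubgroup (Additive (Fin t → (AlgebraicClosure K)ˣ) × AV))
    (hEndGP : EndGP = AddSubgroup.closure
      {q | ∃ (a : Matrix (Fin t) (Fin t) ℤ) (e : E),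
        q = (Additive.ofMul (fun r => ∏ s, (Additive.toMul P.1 s) ^ (a r s)), endA e P.2)}) :
    (∀ p ∈ GK ⊓ EndGP.divClosure,
      (∀ i : Fin t, ∃ u ∈ S.unit K, j u = Additive.toMul p.1 i) ∧ p.2 ∈ AK) ∧
    AddGroup.FG (GK ⊓ EndGP.divClosure : AddSubgroup _) ∧
    Finite ((GK ⊓ EndGP.divClosure : AddSubgroup _) ⧸
      EndGP.addSubgroupOf (GK ⊓ EndGP.divClosure)) := by
  classical
  have hjinj : Function.Injective j := by
    subst hj
    exact Units.map_injective (algebraMap K (AlgebraicClosure K)).injective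
  let U : AddSubgroup (Additive (Fin t → (AlgebraicClosure K)ˣ) × AV) :=
    (Subgroup.toAddSubgroup (Subgroup.pi Set.univ fun _ => (S.unit K).map j)).prod AK
  have hUmem : ∀ p, p ∈ U ↔ (∀ i : Fin t, ∃ u ∈ S.unit K, j u = Additive.toMul p.1 i) ∧
      p.2 ∈ AK := by
    intro p
    constructor
    · rintro ⟨h1, h2⟩
      exact ⟨fun i => h1 i trivial, h2⟩
    · rintro ⟨h1, h2⟩
      exact ⟨fun i _ => h1 i, h2⟩
  have hUfg : U.FG := by
    refine AddSubgroup.FG.prod ?_ ((AddGroup.fg_iff_addSubgroup_fg AK).mp hMW)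
    rw [← Subgroup.fg_iff_add_fg]
    refine Subgroup.FG.pi fun _ => ?_
    rw [Subgroup.fg_iff_submonoid_fg]
    exact ((Subgroup.fg_iff_submonoid_fg _).mp (aux_sunit_fg S hS)).map j
  have hPA : P.2 ∈ AK := by
    rw [hGK] at hPK
    exact hPK.2
  have hEU : EndGP ≤ U := by
    rw [hEndGP, AddSubgroup.closure_le]
    rintro q ⟨a, e, rfl⟩
    refine (hUmem _).mpr ⟨fun i => ?_, hendA e _ hPA⟩
    have : (∏ s, (Additive.toMul P.1 s) ^ (a i s)) ∈ (S.unit K).map j :=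
      Subgroup.prod_mem _ fun s _ => Subgroup.zpow_mem _ (hPT s) _
    exact this
  have hle : GK ⊓ EndGP.divClosure ≤ U := by
    rintro p ⟨hp, n, hn, hnp⟩
    rw [hGK] at hp
    refine (hUmem _).mpr ⟨fun i => ?_, hp.2⟩
    obtain ⟨x, hx⟩ := hp.1 i trivial
    obtain ⟨u, hu, hun⟩ := ((hUmem _).mp (hEU hnp)).1 i
    refine ⟨x, ?_, hx⟩
    have hxn : x ^ n = u := by
      apply hjinj
      rw [hun, map_pow, hx]
      rfl
    intro v hv
    have h1 := hu v hv
    rw [← hxn, Units.val_pow_eq_pow_val, map_pow] at h1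
    exact (pow_eq_one_iff.mp h1).resolve_right hn.ne'
  have hfg : AddGroup.FG (GK ⊓ EndGP.divClosure : AddSubgroup _) := aux_fg_of_le hle hUfg
  refine ⟨fun p hp => (hUmem p).mp (hle hp), hfg, ?_⟩
  have hfgq : AddGroup.FG ((GK ⊓ EndGP.divClosure : AddSubgroup _) ⧸
      EndGP.addSubgroupOf (GK ⊓ EndGP.divClosure)) := inferInstance
  have hfin : Module.Finite ℤ ((GK ⊓ EndGP.divClosure : AddSubgroup _) ⧸
      EndGP.addSubgroupOf (GK ⊓ EndGP.divClosure)) := Module.Finite.iff_addGroup_fg.mpr hfgq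
  refine Module.finite_of_fg_torsion _ ?_
  intro x
  obtain ⟨⟨p, hp⟩, rfl⟩ := QuotientAddGroup.mk_surjective x
  obtain ⟨n, hn, hnp⟩ := hp.2
  refine ⟨⟨(n : ℤ), mem_nonZeroDivisors_of_ne_zero (by exact_mod_cast hn.ne')⟩, ?_⟩
  change (n : ℤ) • ((⟨p, hp⟩ : (GK ⊓ EndGP.divClosure : AddSubgroup _)) :
    (GK ⊓ EndGP.divClosure : AddSubgroup _) ⧸
      EndGP.addSubgroupOf (GK ⊓ EndGP.divClosure)) = 0
  rw [natCast_zsmul, ← QuotientAddGroup.mk_nsmul, QuotientAddGroup.eq_zero_iff]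
  exact hnp
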